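/- arXiv:1001.1384 — 4 statements merged into one kernel-verified Lean document; each statement's English description precedes it below -/
import Mathlib

section
/- For any natural number m ≥ 1 and positive semidefinite n×n matrices T and A, Tr[(T^{1/m} A)^m] ≤ Tr[T A^m]. -/
/-!
By continuity one may take `A = e^{2H}` and `T^{1/m} = e^{2K}` positive definite, and then
`e^K e^{2H} e^K = e^{2L}` with `L` Hermitian. The entire function
`z ↦ tr (e^{2m(1-z)L} e^{mzK} e^{2mzH} e^{mzK})` takes the value `S = tr e^{2mL} = tr (T^{1/m} A)^m`
at `z = 1/m`. Imaginary powers of positive matrices are unitary, so the Cauchy-Schwarz inequality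
for the trace bounds the function by `S` on `re z = 0` and by `R = tr (T A^m)` on `re z = 1`. The
three lines theorem gives `S ≤ S^{1-1/m} R^{1/m}`, that is, `S ≤ R`.
-/

namespace LiebThirring

open NormedSpace
open scoped Matrix Matrix.Norms.Frobenius MatrixOrder ComplexOrder

section Trace

variable {m n R 𝕜 : Type*} [Fintype m] [Fintype n]

lemma trace_mul_pow_comm [DecidableEq n] [CommSemiring R] (A B : Matrix n n R) (k : ℕ) :
    ((A * B) ^ k).trace = ((B * A) ^ k).trace := by
  cases k with
  | zero => simp
  | succ k =>
    rw [pow_succ, ← mul_assoc, mul_pow_mul, mul_assoc, Matrix.trace_mul_comm, mul_assoc, ← pow_succ]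

variable [RCLike 𝕜]

lemma frobenius_norm_eq_sqrt (A : Matrix m n 𝕜) : ‖A‖ = √(∑ i, ∑ j, ‖A i j‖ ^ 2) := by
  simp [Matrix.frobenius_norm_def, Real.sqrt_eq_rpow]

lemma trace_conjTranspose_mul_self (A : Matrix m n 𝕜) :
    (Aᴴ * A).trace = ((‖A‖ ^ 2 : ℝ) : 𝕜) := by
  rw [frobenius_norm_eq_sqrt, Real.sq_sqrt (by positivity), Finset.sum_comm]
  simp [Matrix.trace, Matrix.mul_apply, RCLike.conj_mul]

lemma norm_trace_mul_le (A : Matrix m n 𝕜) (B : Matrix n m 𝕜) :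
    ‖(A * B).trace‖ ≤ ‖A‖ * ‖B‖ :=
  calc ‖(A * B).trace‖ ≤ ∑ i, ∑ j, ‖A i j‖ * ‖Bᵀ i j‖ := by
        simp only [Matrix.transpose_apply, ← norm_mul]
        exact (norm_sum_le _ _).trans (Finset.sum_le_sum fun i _ => norm_sum_le _ _)
    _ ≤ ‖A‖ * ‖Bᵀ‖ := by
        simp only [frobenius_norm_eq_sqrt, ← Fintype.sum_prod_type']
        exact Real.sum_mul_le_sqrt_mul_sqrt _ _ _
    _ = ‖A‖ * ‖B‖ := by rw [Matrix.frobenius_norm_transpose]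

lemma norm_unitary_mul [DecidableEq m] {U : Matrix m m 𝕜} (hU : U ∈ unitary (Matrix m m 𝕜))
    (A : Matrix m n 𝕜) : ‖U * A‖ = ‖A‖ := by
  have hUU : Uᴴ * U = 1 := Unitary.star_mul_self_of_mem hU
  have h : ((‖U * A‖ ^ 2 : ℝ) : 𝕜) = ((‖A‖ ^ 2 : ℝ) : 𝕜) := by
    rw [← trace_conjTranspose_mul_self, ← trace_conjTranspose_mul_self, Matrix.conjTranspose_mul,
      Matrix.mul_assoc, ← Matrix.mul_assoc Uᴴ, hUU, Matrix.one_mul]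
  exact (sq_eq_sq₀ (norm_nonneg _) (norm_nonneg _)).mp (RCLike.ofReal_injective h)

lemma norm_mul_unitary [DecidableEq n] {U : Matrix n n 𝕜} (hU : U ∈ unitary (Matrix n n 𝕜))
    (A : Matrix m n 𝕜) : ‖A * U‖ = ‖A‖ := by
  rw [← Matrix.frobenius_norm_conjTranspose, Matrix.conjTranspose_mul,
    ← Matrix.star_eq_conjTranspose U, norm_unitary_mul (Unitary.star_mem hU),
    Matrix.frobenius_norm_conjTranspose]

end Trace

lemma le_of_le_rpow_mul_rpow {a b θ : ℝ} (ha : 0 ≤ a) (hb : 0 ≤ b) (hθ : 0 < θ)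
    (h : a ≤ a ^ (1 - θ) * b ^ θ) : a ≤ b := by
  rcases ha.eq_or_lt with rfl | ha'
  · exact hb
  · have hsplit : a ^ (1 - θ) * a ^ θ = a := by rw [← Real.rpow_add ha']; simp
    have hpow : a ^ (1 - θ) * a ^ θ ≤ a ^ (1 - θ) * b ^ θ := by rwa [hsplit]
    exact (Real.rpow_le_rpow_iff ha hb hθ).mp
      (le_of_mul_le_mul_left hpow (Real.rpow_pos_of_pos ha' _))

section Exp

variable {n : Type*} [Fintype n] [DecidableEq n]

lemma exp_smul_mul_exp_smul (z w : ℂ) (H : Matrix n n ℂ) :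
    exp (z • H) * exp (w • H) = exp ((z + w) • H) := by
  rw [add_smul, Matrix.exp_add_of_commute _ _ (((Commute.refl H).smul_left z).smul_right w)]

lemma exp_mul_exp_smul_mul_exp (z : ℂ) (H : Matrix n n ℂ) :
    exp H * exp (z • H) * exp H = exp ((2 + z) • H) :=
  calc exp H * exp (z • H) * exp H
    _ = exp ((1 : ℂ) • H) * exp (z • H) * exp ((1 : ℂ) • H) := by rw [one_smul]
    _ = exp ((2 + z) • H) := by
      simp only [exp_smul_mul_exp_smul]
      ring_nf

lemma exp_smul_mem_unitary {H : Matrix n n ℂ} (hH : H.IsHermitian) {z : ℂ} (hz : z.re = 0) :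
    exp (z • H) ∈ unitary (Matrix n n ℂ) := by
  refine exp_mem_unitary_of_mem_skewAdjoint ?_
  have hz' : star z = -z := by apply Complex.ext <;> simp [hz]
  rw [skewAdjoint.mem_iff, star_smul, hz', Matrix.star_eq_conjTranspose, hH.eq, neg_smul]

lemma norm_exp_smul {H : Matrix n n ℂ} (hH : H.IsHermitian) (z : ℂ) :
    ‖exp (z • H)‖ = ‖exp ((z.re : ℂ) • H)‖ := by
  conv_lhs => rw [← Complex.re_add_im z, ← exp_smul_mul_exp_smul]
  exact norm_mul_unitary (exp_smul_mem_unitary hH (by simp)) _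

lemma exp_two_smul (H : Matrix n n ℂ) : exp ((2 : ℂ) • H) = exp H * exp H := by
  rw [two_smul, Matrix.exp_add_of_commute _ _ (Commute.refl H)]

lemma exp_natCast_smul (k : ℕ) (H : Matrix n n ℂ) : exp ((k : ℂ) • H) = exp H ^ k := by
  rw [Nat.cast_smul_eq_nsmul, Matrix.exp_nsmul]

lemma trace_exp_two_smul {H : Matrix n n ℂ} (hH : H.IsHermitian) :
    (exp ((2 : ℂ) • H)).trace = (‖exp H‖ ^ 2 : ℝ) :=
  calc (exp ((2 : ℂ) • H)).trace
    _ = ((exp H)ᴴ * exp H).trace := by rw [hH.exp.eq, exp_two_smul]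
    _ = (‖exp H‖ ^ 2 : ℝ) := trace_conjTranspose_mul_self _

lemma trace_exp_two_smul_mul_exp_two_smul {H K : Matrix n n ℂ} (hH : H.IsHermitian)
    (hK : K.IsHermitian) :
    (exp ((2 : ℂ) • K) * exp ((2 : ℂ) • H)).trace = (‖exp H * exp K‖ ^ 2 : ℝ) :=
  calc (exp ((2 : ℂ) • K) * exp ((2 : ℂ) • H)).trace
    _ = ((exp H * exp K)ᴴ * (exp H * exp K)).trace := by
      rw [Matrix.conjTranspose_mul, hH.exp.eq, hK.exp.eq, exp_two_smul, exp_two_smul, mul_assoc,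
        Matrix.trace_mul_comm]
      simp only [mul_assoc]
    _ = (‖exp H * exp K‖ ^ 2 : ℝ) := trace_conjTranspose_mul_self _

@[fun_prop]
lemma differentiable_exp_smul (H : Matrix n n ℂ) : Differentiable ℂ fun z : ℂ => exp (z • H) :=
  fun z => (hasDerivAt_exp_smul_const H z).differentiableAt

open scoped Matrix.Norms.L2Operator in
lemma exists_exp_two_smul_eq {A : Matrix n n ℂ} (hA : A.PosDef) :
    ∃ H : Matrix n n ℂ, H.IsHermitian ∧ exp ((2 : ℂ) • H) = A := by
  refine ⟨(2⁻¹ : ℂ) • CFC.log A, ?_, ?_⟩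
  · exact IsSelfAdjoint.smul (by simp [IsSelfAdjoint]) IsSelfAdjoint.log
  · rw [smul_inv_smul₀ two_ne_zero, CFC.exp_log A hA.isStrictlyPositive]

/-- The function to which the three lines theorem is applied. It is to be thought of as joining
`tr (e ^ (2 * L))` at `z = 0` to `tr (e ^ K * e ^ (2 * H) * e ^ K)` at `z = 1`; the three Hermitian
matrices are unrelated at this stage. -/
noncomputable def interpolant (H K L : Matrix n n ℂ) (z : ℂ) : ℂ :=
  (exp ((2 * (1 - z)) • L) * exp (z • K) * exp ((2 * z) • H) * exp (z • K)).trace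

lemma differentiable_interpolant (H K L : Matrix n n ℂ) :
    Differentiable ℂ (interpolant H K L) := by
  have hT : Differentiable ℂ (Matrix.trace : Matrix n n ℂ → ℂ) :=
    (Matrix.traceLinearMap n ℂ ℂ).toContinuousLinearMap.differentiable
  have h (a : ℂ → ℂ) (ha : Differentiable ℂ a) (M : Matrix n n ℂ) :
      Differentiable ℂ fun z : ℂ => exp (a z • M) := (differentiable_exp_smul M).comp ha
  refine hT.comp ((((h _ ?_ L).mul (h _ ?_ K)).mul (h _ ?_ H)).mul (h _ ?_ K)) <;> fun_prop

variable {H K L : Matrix n n ℂ} (hH : H.IsHermitian) (hK : K.IsHermitian) (hL : L.IsHermitian)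

include hH hK hL

lemma bddAbove_norm_interpolant : BddAbove
    ((norm ∘ interpolant H K L) '' Complex.HadamardThreeLines.verticalClosedStrip 0 1) := by
  let b (x : ℝ) : ℝ := ‖exp ((2 * (1 - x) : ℂ) • L)‖ * ‖exp ((x : ℂ) • K)‖ *
    ‖exp ((2 * x : ℂ) • H)‖ * ‖exp ((x : ℂ) • K)‖
  have hb : Continuous b := by
    fun_prop
  obtain ⟨C, hC⟩ := (isCompact_Icc (a := (0 : ℝ)) (b := 1)).bddAbove_image hb.continuousOn
  refine ⟨C, Set.forall_mem_image.mpr fun z hz => le_trans ?_ (hC ⟨z.re, hz, rfl⟩)⟩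
  calc ‖interpolant H K L z‖
    _ ≤ ‖exp ((2 * (1 - z)) • L) * exp (z • K) * exp ((2 * z) • H)‖ * ‖exp (z • K)‖ :=
      norm_trace_mul_le _ _
    _ ≤ ‖exp ((2 * (1 - z)) • L)‖ * ‖exp (z • K)‖ * ‖exp ((2 * z) • H)‖ * ‖exp (z • K)‖ := by
      gcongr
      exact norm_mul₃_le
    _ = b z.re := by
      simp only [b, norm_exp_smul hL (2 * (1 - z)), norm_exp_smul hK z, norm_exp_smul hH (2 * z)]
      simp

lemma norm_interpolant_le_of_re_eq_zero {z : ℂ} (hz : z.re = 0) :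
    ‖interpolant H K L z‖ ≤ ‖exp L‖ ^ 2 := by
  let U := exp ((-2 * z) • L)
  let V := exp (z • K) * exp ((2 * z) • H) * exp (z • K)
  have hU : U ∈ unitary (Matrix n n ℂ) := exp_smul_mem_unitary hL (by simp [hz])
  have hV : V ∈ unitary (Matrix n n ℂ) := by
    refine mul_mem (mul_mem ?_ ?_) ?_ <;> exact exp_smul_mem_unitary (by assumption) (by simp [hz])
  calc ‖interpolant H K L z‖
    _ = ‖(exp L * (U * exp L * V)).trace‖ := by
      have hsplit : exp L * (U * exp L) = exp ((2 * (1 - z)) • L) := by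
        rw [← mul_assoc, exp_mul_exp_smul_mul_exp]
        ring_nf
      simp only [interpolant, V, ← hsplit, mul_assoc]
    _ ≤ ‖exp L‖ * ‖U * exp L * V‖ := norm_trace_mul_le _ _
    _ = ‖exp L‖ ^ 2 := by rw [norm_mul_unitary hV, norm_unitary_mul hU, sq]

lemma norm_interpolant_le_of_re_eq_one {z : ℂ} (hz : z.re = 1) :
    ‖interpolant H K L z‖ ≤ ‖exp H * exp K‖ ^ 2 := by
  obtain ⟨w, rfl⟩ : ∃ w, z = 1 + w := ⟨z - 1, by ring⟩
  have hw : w.re = 0 := by simpa using hz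
  let U := exp (w • K) * exp ((-2 * w) • L) * exp (w • K)
  let V := exp ((2 * w) • H)
  have hU : U ∈ unitary (Matrix n n ℂ) := by
    refine mul_mem (mul_mem ?_ ?_) ?_ <;> exact exp_smul_mem_unitary (by assumption) (by simp [hw])
  have hV : V ∈ unitary (Matrix n n ℂ) := exp_smul_mem_unitary hH (by simp [hw])
  have hK_left : exp (w • K) * exp K = exp ((1 + w) • K) := by
    rw [add_comm, ← exp_smul_mul_exp_smul, one_smul]
  have hK_right : exp K * exp (w • K) = exp ((1 + w) • K) := by
    rw [← exp_smul_mul_exp_smul, one_smul]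
  have hH_split : exp H * V * exp H = exp ((2 * (1 + w)) • H) := by
    rw [exp_mul_exp_smul_mul_exp, mul_one_add]
  have hconj : ‖exp K * exp H‖ = ‖exp H * exp K‖ := by
    rw [← Matrix.frobenius_norm_conjTranspose, Matrix.conjTranspose_mul, hH.exp.eq, hK.exp.eq]
  calc ‖interpolant H K L (1 + w)‖
    _ = ‖(exp ((-2 * w) • L) * (exp (w • K) * exp K) * (exp H * V * exp H) *
          exp K * exp (w • K)).trace‖ := by
      rw [interpolant, hK_left, hH_split, mul_assoc _ (exp K), hK_right]
      ring_nf
    _ = ‖((U * (exp K * exp H)) * (V * (exp H * exp K))).trace‖ := by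
      rw [Matrix.trace_mul_comm]
      simp only [U, mul_assoc]
    _ ≤ ‖U * (exp K * exp H)‖ * ‖V * (exp H * exp K)‖ := norm_trace_mul_le _ _
    _ = ‖exp H * exp K‖ ^ 2 := by
      rw [norm_unitary_mul hU, norm_unitary_mul hV, hconj, sq]

lemma norm_interpolant_le {θ : ℝ} (hθ₀ : 0 ≤ θ) (hθ₁ : θ ≤ 1) :
    ‖interpolant H K L θ‖ ≤ (‖exp L‖ ^ 2) ^ (1 - θ) * (‖exp H * exp K‖ ^ 2) ^ θ := by
  refine Complex.HadamardThreeLines.norm_le_interp_of_mem_verticalClosedStrip₀₁' _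
    ⟨hθ₀, hθ₁⟩ (differentiable_interpolant H K L).diffContOnCl
    (bddAbove_norm_interpolant hH hK hL) (fun z hz => ?_) (fun z hz => ?_)
  · exact norm_interpolant_le_of_re_eq_zero hH hK hL hz
  · exact norm_interpolant_le_of_re_eq_one hH hK hL hz

lemma norm_exp_le_norm_exp_mul_exp {θ : ℝ} (hθ₀ : 0 < θ) (hθ₁ : θ ≤ 1)
    (h : exp ((2 * θ : ℂ) • L) = exp ((θ : ℂ) • K) * exp ((2 * θ : ℂ) • H) * exp ((θ : ℂ) • K)) :
    ‖exp L‖ ≤ ‖exp H * exp K‖ := by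
  have hF : interpolant H K L θ = (‖exp L‖ ^ 2 : ℝ) := by
    have hmul : exp ((2 * (1 - θ) : ℂ) • L) * exp ((2 * θ : ℂ) • L) = exp ((2 : ℂ) • L) := by
      rw [exp_smul_mul_exp_smul]
      ring_nf
    rw [← trace_exp_two_smul hL, ← hmul, h, interpolant]
    simp only [Matrix.mul_assoc]
  have hS := norm_interpolant_le hH hK hL hθ₀.le hθ₁
  rw [hF, Complex.norm_of_nonneg (by positivity)] at hS
  exact (sq_le_sq₀ (norm_nonneg _) (norm_nonneg _)).mp
    (le_of_le_rpow_mul_rpow (by positivity) (by positivity) hθ₀ hS)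

end Exp

section PosSemidef

variable {n : Type*} [Fintype n] [DecidableEq n]

theorem trace_mul_pow_le_of_posDef {A B : Matrix n n ℂ} (hA : A.PosDef) (hB : B.PosDef) (m : ℕ) :
    ((B * A) ^ m).trace ≤ (B ^ m * A ^ m).trace := by
  rcases m.eq_zero_or_pos with rfl | hm
  · simp
  obtain ⟨H, hH, rfl⟩ := exists_exp_two_smul_eq hA
  obtain ⟨K, hK, rfl⟩ := exists_exp_two_smul_eq hB
  have hC : (exp K * exp ((2 : ℂ) • H) * exp K).PosDef := by
    have := hA.conjTranspose_mul_mul_same (B := exp K)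
      (Matrix.mulVec_injective_of_isUnit (Matrix.isUnit_exp K))
    rwa [hK.exp.eq] at this
  obtain ⟨L, hL, hLC⟩ := exists_exp_two_smul_eq hC
  have hsmul {M : Matrix n n ℂ} (hM : M.IsHermitian) : ((m : ℂ) • M).IsHermitian :=
    IsSelfAdjoint.smul (by simp [IsSelfAdjoint]) hM
  have hnorm : ‖exp ((m : ℂ) • L)‖ ≤ ‖exp ((m : ℂ) • H) * exp ((m : ℂ) • K)‖ := by
    refine norm_exp_le_norm_exp_mul_exp (hsmul hH) (hsmul hK) (hsmul hL) (θ := (m : ℝ)⁻¹)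
      (by positivity) (Nat.cast_inv_le_one m) ?_
    simpa [smul_smul, mul_assoc, hm.ne'] using hLC
  have hleft : ((exp ((2 : ℂ) • K) * exp ((2 : ℂ) • H)) ^ m).trace =
      (‖exp ((m : ℂ) • L)‖ ^ 2 : ℝ) := by
    rw [← trace_exp_two_smul (hsmul hL), smul_comm, exp_natCast_smul, hLC, exp_two_smul K,
      mul_assoc, trace_mul_pow_comm, mul_assoc]
  have hright : (exp ((2 : ℂ) • K) ^ m * exp ((2 : ℂ) • H) ^ m).trace =
      (‖exp ((m : ℂ) • H) * exp ((m : ℂ) • K)‖ ^ 2 : ℝ) := by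
    rw [← trace_exp_two_smul_mul_exp_two_smul (hsmul hH) (hsmul hK), smul_comm 2, smul_comm 2,
      exp_natCast_smul, exp_natCast_smul]
  rw [hleft, hright]
  exact_mod_cast pow_le_pow_left₀ (norm_nonneg _) hnorm 2

theorem trace_mul_pow_le {A B : Matrix n n ℂ} (hA : A.PosSemidef) (hB : B.PosSemidef) (m : ℕ) :
    ((B * A) ^ m).trace ≤ (B ^ m * A ^ m).trace := by
  have posDef_add {M : Matrix n n ℂ} (hM : M.PosSemidef) {ε : ℝ} (hε : 0 < ε) :
      (M + ε • (1 : Matrix n n ℂ)).PosDef :=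
    .posSemidef_add hM (.smul .one hε)
  have hl : Continuous fun ε : ℝ => (((B + ε • 1) * (A + ε • 1)) ^ m).trace := by fun_prop
  have hr : Continuous fun ε : ℝ => ((B + ε • 1) ^ m * (A + ε • 1) ^ m).trace := by fun_prop
  have hle : ∀ᶠ ε : ℝ in nhdsWithin 0 (Set.Ioi 0),
      (((B + ε • 1) * (A + ε • 1)) ^ m).trace ≤ ((B + ε • 1) ^ m * (A + ε • 1) ^ m).trace := by
    filter_upwards [self_mem_nhdsWithin] with ε hε
    exact trace_mul_pow_le_of_posDef (posDef_add hA hε) (posDef_add hB hε) m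
  simpa using le_of_tendsto_of_tendsto (hl.tendsto' 0 _ rfl |>.mono_left nhdsWithin_le_nhds)
    (hr.tendsto' 0 _ rfl |>.mono_left nhdsWithin_le_nhds) hle

variable {𝕜 : Type*} [RCLike 𝕜] {T : Matrix n n 𝕜} (hT : T.PosSemidef)

lemma cfc_rpow_inv_natCast_pow {m : ℕ} (hm : m ≠ 0) :
    hT.1.cfc (fun x : ℝ => x ^ (m : ℝ)⁻¹) ^ m = T := by
  rw [← hT.1.cfc_eq, ← cfc_pow _ m T]
  conv_rhs => rw [← cfc_id ℝ T]
  refine cfc_congr fun x hx => ?_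
  exact Real.rpow_inv_natCast_pow (spectrum_nonneg_of_nonneg hT.nonneg hx) hm

lemma posSemidef_cfc_rpow (p : ℝ) : (hT.1.cfc (fun x : ℝ => x ^ p)).PosSemidef := by
  rw [← hT.1.cfc_eq, ← Matrix.nonneg_iff_posSemidef]
  exact cfc_nonneg fun x hx => Real.rpow_nonneg (spectrum_nonneg_of_nonneg hT.nonneg hx) _

end PosSemidef

end LiebThirring

open Matrix ComplexOrder in
theorem trace_rootPow_mul_pow_le_general {ι : Type*} [Fintype ι] [DecidableEq ι] {m : ℕ}
    (hm : 1 ≤ m) (T A : Matrix ι ι ℂ) (hT : T.PosSemidef) (hA : A.PosSemidef) :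
    trace ((hT.1.cfc (fun x : ℝ => x ^ ((m : ℝ)⁻¹)) * A) ^ m) ≤ trace (T * A ^ m) := by
  have h := LiebThirring.trace_mul_pow_le hA (LiebThirring.posSemidef_cfc_rpow hT (m : ℝ)⁻¹) m
  rwa [LiebThirring.cfc_rpow_inv_natCast_pow hT (Nat.one_le_iff_ne_zero.mp hm)] at h

open Matrix ComplexOrder in
theorem trace_rootPow_mul_pow_le {n m : ℕ} (hm : 1 ≤ m)
    (T A : Matrix (Fin n) (Fin n) ℂ) (hT : T.PosSemidef) (hA : A.PosSemidef) :
    trace ((hT.1.cfc (fun x : ℝ => x ^ ((m : ℝ)⁻¹)) * A) ^ m) ≤ trace (T * A ^ m) :=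
  trace_rootPow_mul_pow_le_general hm T A hT hA
end

section
/- Let T be an invertible positive definite 2×2 matrix, A a positive semidefinite 2×2 matrix with Tr[T A²] > 0, and p₁,…,p_m positive reals summing to 1 with not all p_i equal to 1/m or with T having distinct eigenvalues. If Tr[T^{p₁} A T^{p₂} A ⋯ T^{p_m} A] = Tr[T A^m] and this trace is nonzero, and the eigenvalues of T are distinct, then T is a scalar multiple of the identity — i.e., equality Tr[T^{p₁}A⋯T^{p_m}A] = Tr[TA^m] (with A having a nonzero off-diagonal matrix element in the eigenbasis of T) forces T = kI. -/
/-!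
In an eigenbasis of `T`, with eigenvalues `d`, both traces are sums over closed walks
`s : Fin m → Fin 2`. The walk `s` contributes its weight, the product of the entries of `A` along
`s`, times the weighted geometric mean `∏ i, d (s i) ^ p i` on the left. On the right the factor is
`d (s i)` for any fixed `i`, because weights are invariant under rotation, and averaging over `i`
turns it into the arithmetic mean `∑ i, p i * d (s i)`. For a positive semidefinite `2 × 2` matrix
whose off-diagonal entries do not vanish, all weights are positive: each entry is its norm times a
phase `u i * star (u j)`, and the phases cancel along closed walks. If the eigenvalues were
distinct, AM-GM would be strict on any walk visiting both indices, so the traces would differ.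
-/

section EqualityCase

open Matrix ComplexOrder

theorem sum_pi_fin_succ {m : ℕ} {n M : Type*} [Fintype n] [AddCommMonoid M]
    (F : (Fin (m + 1) → n) → M) : ∑ s, F s = ∑ a, ∑ s, F (Fin.cons a s) := by
  rw [← (Fin.consEquiv fun _ => n).sum_comp, Fintype.sum_prod_type]
  rfl

section ClosedWalk

variable {m : ℕ} {n R : Type*} [CommSemiring R]

/-- The weight of the closed walk `s 0 → s 1 → ⋯ → s (m - 1) → s 0`: the product of the entries
of `B` over its steps, where `finRotate m` is the cyclic successor on `Fin m`. Traces of products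
of matrices are sums of such weights. -/
def closedWalkWeight (B : Matrix n n R) (s : Fin m → n) : R :=
  ∏ i, B (s i) (s (finRotate m i))

theorem closedWalkWeight_comp_finRotate (B : Matrix n n R) (s : Fin m → n) :
    closedWalkWeight B (s ∘ finRotate m) = closedWalkWeight B s :=
  Equiv.prod_comp (finRotate m) fun i => B (s i) (s (finRotate m i))

variable [Fintype n] [DecidableEq n]

theorem closedWalkWeight_diagonal_mul_mul_diagonal (u v : n → R) (B : Matrix n n R)
    (s : Fin m → n) :
    closedWalkWeight (diagonal u * B * diagonal v) s =
      (∏ i, u (s i) * v (s i)) * closedWalkWeight B s := by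
  have hv : ∏ i, v (s (finRotate m i)) = ∏ i, v (s i) :=
    Equiv.prod_comp (finRotate m) fun i => v (s i)
  simp only [closedWalkWeight, mul_diagonal, diagonal_mul, Finset.prod_mul_distrib, hv]
  ring

theorem prod_ofFn_succ_apply (M : Fin (m + 1) → Matrix n n R) (a b : n) :
    (List.ofFn M).prod a b =
      ∑ s : Fin m → n, ∏ i, M i ((Fin.cons a s : Fin (m + 1) → n) i)
        ((Fin.snoc s b : Fin (m + 1) → n) i) := by
  induction m generalizing a with
  | zero => simp [Fin.snoc]
  | succ m ih =>
    rw [List.ofFn_succ, List.prod_cons, mul_apply, sum_pi_fin_succ]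
    refine Finset.sum_congr rfl fun c _ => ?_
    rw [ih, Finset.mul_sum]
    refine Finset.sum_congr rfl fun s _ => ?_
    simp only [Fin.prod_univ_succ (n := m + 1), ← Fin.cons_snoc_eq_snoc_cons, Fin.cons_zero,
      Fin.cons_succ]

theorem trace_prod_ofFn_succ (M : Fin (m + 1) → Matrix n n R) :
    trace (List.ofFn M).prod =
      ∑ s : Fin (m + 1) → n, ∏ i, M i (s i) (s (finRotate (m + 1) i)) := by
  simp only [sum_pi_fin_succ, trace, diag_apply, prod_ofFn_succ_apply, Fin.snoc_eq_cons_rotate]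

theorem trace_prod_ofFn_diagonal_mul (c : Fin (m + 1) → n → R) (B : Matrix n n R) :
    trace (List.ofFn fun i => diagonal (c i) * B).prod =
      ∑ s : Fin (m + 1) → n, (∏ i, c i (s i)) * closedWalkWeight B s := by
  simp only [trace_prod_ofFn_succ, diagonal_mul, Finset.prod_mul_distrib, closedWalkWeight]

theorem sum_apply_mul_closedWalkWeight (d : n → R) (B : Matrix n n R) (i : Fin (m + 1)) :
    ∑ s : Fin (m + 1) → n, d (s i) * closedWalkWeight B s = trace (diagonal d * B ^ (m + 1)) := by
  induction i using Fin.induction with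
  | zero =>
    have h := trace_prod_ofFn_diagonal_mul (Fin.cons d fun _ => 1 : Fin (m + 1) → n → R) B
    simp only [List.ofFn_succ, List.prod_cons, Fin.cons_zero, Fin.cons_succ, Pi.one_def,
      diagonal_one, one_mul, List.ofFn_const, List.prod_replicate, Fin.prod_univ_succ,
      Finset.prod_const_one, mul_one, mul_assoc, ← pow_succ'] at h
    exact h.symm
  | succ i ih =>
    have hrot : finRotate (m + 1) i.castSucc = i.succ := by
      rw [finRotate_apply, Fin.coeSucc_eq_succ]
    calc ∑ s : Fin (m + 1) → n, d (s i.succ) * closedWalkWeight B s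
        = ∑ s : Fin (m + 1) → n, d ((s ∘ finRotate (m + 1)) i.castSucc) *
            closedWalkWeight B (s ∘ finRotate (m + 1)) := by
          simp only [Function.comp_apply, hrot, closedWalkWeight_comp_finRotate]
      _ = ∑ s : Fin (m + 1) → n, d (s i.castSucc) * closedWalkWeight B s :=
          ((finRotate (m + 1)).symm.arrowCongr (Equiv.refl n)).sum_comp fun s =>
            d (s i.castSucc) * closedWalkWeight B s
      _ = trace (diagonal d * B ^ (m + 1)) := ih

end ClosedWalk

theorem trace_conjStarAlgAut {n R : Type*} [Fintype n] [DecidableEq n] [CommRing R] [StarRing R]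
    (U : unitaryGroup n R) (X : Matrix n n R) :
    trace (Unitary.conjStarAlgAut R _ U X) = trace X := by
  rw [Unitary.conjStarAlgAut_apply, trace_mul_cycle, Unitary.coe_star_mul_self, one_mul]

theorem diag_pos_of_posSemidef_of_apply_ne_zero {𝕜 n : Type*} [RCLike 𝕜]
    {C : Matrix n n 𝕜} (hC : C.PosSemidef) {i j : n} (h : C i j ≠ 0) : 0 < C i i := by
  refine hC.diag_nonneg.lt_of_ne' fun hi => ?_
  have hdet := (hC.submatrix ![i, j]).det_nonneg
  simp only [det_fin_two, submatrix_apply, cons_val_zero, cons_val_one, hi, zero_mul, zero_sub,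
    ← hC.1.apply j i, RCLike.star_def, RCLike.mul_conj] at hdet
  have hnorm : 0 < ‖C i j‖ ^ 2 := by positivity
  exact hnorm.not_ge (by exact_mod_cast neg_nonneg.1 hdet)

section RCLike

variable {𝕜 n : Type*} [RCLike 𝕜] [Fintype n] [DecidableEq n]

theorem trace_prod_rpow_lt_trace_diagonal_mul_pow {m : ℕ} {C : Matrix n n 𝕜} {p : Fin m → ℝ}
    (hp : ∀ i, 0 < p i) (hsum : ∑ i, p i = 1) {d : n → ℝ} (hd : ∀ j, 0 ≤ d j)
    (hC : ∀ s : Fin m → n, 0 ≤ closedWalkWeight C s) {s₀ : Fin m → n}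
    (hs₀ : 0 < closedWalkWeight C s₀) {i j : Fin m} (hij : d (s₀ i) ≠ d (s₀ j)) :
    trace (List.ofFn fun i => diagonal (fun k => ((d k ^ p i : ℝ) : 𝕜)) * C).prod <
      trace (diagonal (fun k => (d k : 𝕜)) * C ^ m) := by
  obtain ⟨m, rfl⟩ : ∃ l, m = l + 1 := ⟨m - 1, by have := i.pos; omega⟩
  have htrace : trace (diagonal (fun k => (d k : 𝕜)) * C ^ (m + 1)) =
      ∑ s : Fin (m + 1) → n, ((∑ i, p i * d (s i) : ℝ) : 𝕜) * closedWalkWeight C s := by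
    push_cast
    simp only [Finset.sum_mul, mul_assoc]
    rw [Finset.sum_comm]
    simp only [← Finset.mul_sum, sum_apply_mul_closedWalkWeight (fun k => (d k : 𝕜)) C]
    rw [← Finset.sum_mul, ← RCLike.ofReal_sum, hsum, RCLike.ofReal_one, one_mul]
  rw [trace_prod_ofFn_diagonal_mul, htrace]
  simp only [← RCLike.ofReal_prod]
  refine Finset.sum_lt_sum (fun s _ => ?_) ⟨s₀, Finset.mem_univ _, ?_⟩
  · refine mul_le_mul_of_nonneg_right (RCLike.ofReal_le_ofReal.2 ?_) (hC s)
    exact Real.geom_mean_le_arith_mean_weighted _ _ _ (fun i _ => (hp i).le) hsum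
      fun i _ => hd (s i)
  · refine mul_lt_mul_of_pos_right (RCLike.ofReal_lt_ofReal.2 ?_) hs₀
    rw [Real.geom_mean_lt_arith_mean_weighted_iff_of_pos _ _ _ (fun i _ => hp i) hsum
      fun i _ => hd (s₀ i)]
    exact ⟨i, Finset.mem_univ i, j, Finset.mem_univ j, hij⟩

variable {T : Matrix n n 𝕜} (hT : T.IsHermitian)

/-- The matrix of `A` in the orthonormal eigenbasis of the Hermitian matrix `T` chosen by Mathlib,
in which `T` itself is `diagonal hT.eigenvalues`. -/
noncomputable def eigenbasisMatrix (A : Matrix n n 𝕜) : Matrix n n 𝕜 :=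
  star (hT.eigenvectorUnitary : Matrix n n 𝕜) * A * (hT.eigenvectorUnitary : Matrix n n 𝕜)

theorem conjStarAlgAut_eigenbasisMatrix (A : Matrix n n 𝕜) :
    Unitary.conjStarAlgAut 𝕜 _ hT.eigenvectorUnitary (eigenbasisMatrix hT A) = A :=
  (Unitary.conjStarAlgAut 𝕜 _ hT.eigenvectorUnitary).apply_symm_apply A

theorem posSemidef_eigenbasisMatrix {A : Matrix n n 𝕜} (hA : A.PosSemidef) :
    (eigenbasisMatrix hT A).PosSemidef :=
  hA.conjTranspose_mul_mul_same _

theorem trace_prod_cfc_mul {m : ℕ} (f : Fin m → ℝ → ℝ) (A : Matrix n n 𝕜) :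
    trace (List.ofFn fun i => hT.cfc (f i) * A).prod =
      trace (List.ofFn fun i =>
        diagonal (fun j => (f i (hT.eigenvalues j) : 𝕜)) * eigenbasisMatrix hT A).prod := by
  conv_lhs => rw [← conjStarAlgAut_eigenbasisMatrix hT A]
  simp only [IsHermitian.cfc, ← map_mul]
  rw [← trace_conjStarAlgAut hT.eigenvectorUnitary (List.ofFn fun _ => diagonal _ * _).prod,
    map_list_prod, List.map_ofFn]
  rfl

theorem trace_mul_pow_eq_trace_diagonal_mul_pow (A : Matrix n n 𝕜) (m : ℕ) :
    trace (T * A ^ m) =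
      trace (diagonal (fun j => (hT.eigenvalues j : 𝕜)) * eigenbasisMatrix hT A ^ m) := by
  rw [← trace_conjStarAlgAut hT.eigenvectorUnitary (diagonal _ * _), map_mul, map_pow,
    conjStarAlgAut_eigenbasisMatrix]
  exact congrArg (fun X => trace (X * A ^ m)) hT.spectral_theorem

theorem eq_smul_one_of_eigenvalues_eq {k : ℝ} (h : ∀ j, hT.eigenvalues j = k) :
    T = (k : 𝕜) • (1 : Matrix n n 𝕜) := by
  have hd : diagonal (RCLike.ofReal ∘ hT.eigenvalues) = (k : 𝕜) • (1 : Matrix n n 𝕜) := by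
    rw [smul_one_eq_diagonal]
    simp only [Function.comp_def, h]
  rw [hT.spectral_theorem, hd, map_smul, map_one]

end RCLike

section FinTwo

variable {𝕜 : Type*} [RCLike 𝕜]

theorem apply_ne_zero_of_posSemidef {C : Matrix (Fin 2) (Fin 2) 𝕜} (hC : C.PosSemidef)
    (h01 : C 0 1 ≠ 0) : ∀ i j, C i j ≠ 0 := by
  have h10 : C 1 0 ≠ 0 := by rwa [← hC.1.apply, star_ne_zero]
  exact Fin.forall_fin_two.2
    ⟨Fin.forall_fin_two.2 ⟨(diag_pos_of_posSemidef_of_apply_ne_zero hC h01).ne', h01⟩,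
      Fin.forall_fin_two.2 ⟨h10, (diag_pos_of_posSemidef_of_apply_ne_zero hC h10).ne'⟩⟩

theorem exists_phase_mul_norm_mul_star_phase {C : Matrix (Fin 2) (Fin 2) 𝕜}
    (hC : C.PosSemidef) : ∃ u : Fin 2 → 𝕜, (∀ i, u i * star (u i) = 1) ∧
      C = diagonal u * of (fun i j => (‖C i j‖ : 𝕜)) * diagonal (star u) := by
  obtain ⟨c, hc, h01⟩ := RCLike.exists_norm_mul_eq_self (C 0 1)
  have hphase : c * star c = 1 := by simp [RCLike.mul_conj, hc]
  have hdiag (i : Fin 2) : (‖C i i‖ : 𝕜) = C i i := RCLike.norm_of_nonneg' hC.diag_nonneg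
  have h10 : (‖C 1 0‖ : 𝕜) * star c = C 1 0 := by
    rw [← hC.1.apply 1 0, norm_star]
    nth_rw 2 [← h01]
    simp [mul_comm]
  refine ⟨![c, 1], Fin.forall_fin_two.2 ⟨hphase, by simp⟩, ?_⟩
  ext i j
  rw [mul_diagonal, diagonal_mul, of_apply, Pi.star_apply]
  fin_cases i <;> fin_cases j
  · simp only [Fin.zero_eta, cons_val_zero]
    rw [mul_right_comm, hphase, one_mul, hdiag]
  · simp [h01]
  · simpa using h10.symm
  · simp [hdiag]

theorem closedWalkWeight_pos_of_posSemidef {m : ℕ} {C : Matrix (Fin 2) (Fin 2) 𝕜}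
    (hC : C.PosSemidef) (h01 : C 0 1 ≠ 0) (s : Fin m → Fin 2) : 0 < closedWalkWeight C s := by
  obtain ⟨u, hu, hCu⟩ := exists_phase_mul_norm_mul_star_phase hC
  rw [hCu, closedWalkWeight_diagonal_mul_mul_diagonal]
  simp only [Pi.star_apply, hu, Finset.prod_const_one, one_mul]
  exact Finset.prod_pos fun i _ =>
    RCLike.ofReal_pos.2 (norm_pos_iff.2 (apply_ne_zero_of_posSemidef hC h01 _ _))

theorem equality_case_forces_scalar_general {m : ℕ} (hm : 2 ≤ m) {T A : Matrix (Fin 2) (Fin 2) 𝕜}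
    (hT : T.PosSemidef) (hA : A.PosSemidef)
    {p : Fin m → ℝ} (hp : ∀ i, 0 < p i) (hsum : ∑ i, p i = 1)
    (hoff : eigenbasisMatrix hT.1 A 0 1 ≠ 0)
    (heq : trace (List.ofFn fun i : Fin m => hT.1.cfc (fun x : ℝ => x ^ p i) * A).prod =
      trace (T * A ^ m)) :
    ∃ k : 𝕜, T = k • (1 : Matrix (Fin 2) (Fin 2) 𝕜) := by
  suffices h : hT.1.eigenvalues 0 = hT.1.eigenvalues 1 from
    ⟨_, eq_smul_one_of_eigenvalues_eq hT.1 (Fin.forall_fin_two.2 ⟨h, rfl⟩)⟩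
  by_contra hne
  have hweight (s : Fin m → Fin 2) : 0 < closedWalkWeight (eigenbasisMatrix hT.1 A) s :=
    closedWalkWeight_pos_of_posSemidef (posSemidef_eigenbasisMatrix hT.1 hA) hoff s
  let s₀ : Fin m → Fin 2 := Pi.single ⟨0, by omega⟩ 1
  have hs₀ : hT.1.eigenvalues (s₀ ⟨1, hm⟩) ≠ hT.1.eigenvalues (s₀ ⟨0, by omega⟩) := by
    simpa [s₀] using hne
  rw [trace_prod_cfc_mul, trace_mul_pow_eq_trace_diagonal_mul_pow hT.1] at heq
  exact (trace_prod_rpow_lt_trace_diagonal_mul_pow hp hsum hT.eigenvalues_nonneg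
    (fun s => (hweight s).le) (hweight s₀) hs₀).ne heq

end FinTwo

end EqualityCase

open Matrix ComplexOrder in
theorem equality_case_forces_scalar {m : ℕ} (hm : 2 ≤ m)
    (T A : Matrix (Fin 2) (Fin 2) ℂ) (hT : T.PosDef) (hA : A.PosSemidef)
    (p : Fin m → ℝ) (hp : ∀ i, 0 < p i) (hsum : ∑ i, p i = 1)
    (hoff : (star (hT.1.eigenvectorUnitary : Matrix (Fin 2) (Fin 2) ℂ) * A *
        (hT.1.eigenvectorUnitary : Matrix (Fin 2) (Fin 2) ℂ)) 0 1 ≠ 0)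
    (heq : trace (List.ofFn (fun i : Fin m => hT.1.cfc (fun x : ℝ => x ^ p i) * A)).prod =
        trace (T * A ^ m)) :
    ∃ k : ℂ, T = k • (1 : Matrix (Fin 2) (Fin 2) ℂ) :=
  equality_case_forces_scalar_general hm hT.posSemidef hA hp hsum hoff heq
end

section
/- There exist 3×3 positive semidefinite complex matrices T, A and positive reals p₁, p₂, p₃ with p₁+p₂+p₃ = 1 such that Tr[T^{p₁} A T^{p₂} A T^{p₃} A] is not a real number. -/
/-!
For diagonal `T` and Hermitian `A` of size three, write `Tr[T^p₁ A T^p₂ A T^p₃ A]` as a sum over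
index triples `(i, j, k)`. The term is weighted by `A i j * A j k * A k i`, which is real when two
indices agree, and otherwise is `A 0 1 * A 1 2 * A 2 0` or its conjugate according to the parity of
`(i, j, k)`. The imaginary part is therefore `Im (A 0 1 * A 1 2 * A 2 0)` times the determinant of
the powers `tⱼ ^ pᵢ` of the diagonal entries. For exponents `s, 2s, 3s` this determinant is
`∏ tⱼ ^ s` times the Vandermonde determinant of the `tⱼ ^ s`, hence nonzero as soon as `s ≠ 0` and
the `tⱼ` are positive and distinct.
-/

open Matrix

section DiagonalFunctionalCalculus

variable {m n : Type*} [Fintype m] [Fintype n] [DecidableEq m] [DecidableEq n]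

theorem diagonal_comp_mul_eq_mul_diagonal_comp {α R : Type*} [CommRing R] [IsDomain R]
    {c : α → R} (hc : Function.Injective c) {d : m → α} {e : n → α} {M : Matrix m n R}
    (h : diagonal (c ∘ d) * M = M * diagonal (c ∘ e)) (f : α → α) :
    diagonal (c ∘ f ∘ d) * M = M * diagonal (c ∘ f ∘ e) := by
  ext i j
  have hij : c (d i) * M i j = c (e j) * M i j := by
    simpa [mul_comm (M i j)] using congr($h i j)
  obtain hde | hM := mul_eq_mul_right_iff.mp hij
  · simp [hc hde, mul_comm]
  · simp [hM]

theorem cfc_diagonal_ofReal {𝕜 : Type*} [RCLike 𝕜] {d : n → ℝ}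
    (hd : (diagonal (RCLike.ofReal ∘ d) : Matrix n n 𝕜).IsHermitian) (f : ℝ → ℝ) :
    hd.cfc f = diagonal (RCLike.ofReal ∘ f ∘ d) := by
  let U : Matrix n n 𝕜 := hd.eigenvectorUnitary.1
  have hU_mul_star : U * star U = 1 := Unitary.coe_mul_star_self _
  have hU_star_mul : star U * U = 1 := Unitary.coe_star_mul_self _
  have hU_intertwines :
      diagonal (RCLike.ofReal ∘ d) * U = U * diagonal (RCLike.ofReal ∘ hd.eigenvalues) := by
    conv_lhs => rw [hd.spectral_theorem, Unitary.conjStarAlgAut_apply]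
    rw [mul_assoc, hU_star_mul, mul_one]
  calc hd.cfc f = U * diagonal (RCLike.ofReal ∘ f ∘ hd.eigenvalues) * star U := by
        rw [IsHermitian.cfc, Unitary.conjStarAlgAut_apply]
    _ = diagonal (RCLike.ofReal ∘ f ∘ d) * U * star U := by
        rw [diagonal_comp_mul_eq_mul_diagonal_comp RCLike.ofReal_injective hU_intertwines f]
    _ = diagonal (RCLike.ofReal ∘ f ∘ d) := by rw [mul_assoc, hU_mul_star, mul_one]

end DiagonalFunctionalCalculus

theorem trace_diagonal_mul_diagonal_mul_diagonal_mul {n R : Type*} [Fintype n] [DecidableEq n]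
    [CommSemiring R] (a b c : n → R) (A : Matrix n n R) :
    trace (diagonal a * A * diagonal b * A * diagonal c * A) =
      ∑ i, ∑ j, ∑ k, a i * b j * c k * (A i j * A j k * A k i) := by
  have h_assoc : diagonal a * A * diagonal b * A * diagonal c * A =
      diagonal a * A * (diagonal b * A * (diagonal c * A)) := by simp only [mul_assoc]
  simp only [h_assoc, trace, diag_apply, mul_apply (M := diagonal a * A),
    mul_apply (M := diagonal b * A), diagonal_mul, Finset.mul_sum]
  refine Finset.sum_congr rfl fun i _ => Finset.sum_congr rfl fun j _ =>
    Finset.sum_congr rfl fun k _ => ?_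
  ring

theorem im_triple_product_swap {n : Type*} {A : Matrix n n ℂ} (hA : A.IsHermitian) (i j k : n) :
    (A j i * A i k * A k j).im = -(A i j * A j k * A k i).im := by
  rw [← Complex.conj_im]
  simp only [map_mul, ← Complex.star_def, hA.apply]
  ring_nf

theorem im_trace_diagonal_mul_isHermitian {A : Matrix (Fin 3) (Fin 3) ℂ} (hA : A.IsHermitian)
    (W : Matrix (Fin 3) (Fin 3) ℝ) :
    (trace (diagonal (Complex.ofReal ∘ W 0) * A * diagonal (Complex.ofReal ∘ W 1) * A *
      diagonal (Complex.ofReal ∘ W 2) * A)).im = (A 0 1 * A 1 2 * A 2 0).im * W.det := by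
  let c (i j k : Fin 3) : ℝ := (A i j * A j k * A k i).im
  have hc_swap (i j k) : c j i k = -c i j k := im_triple_product_swap hA i j k
  have hc_rotate (i j k) : c j k i = c i j k := congrArg Complex.im (by ring)
  have hc_fst_eq_snd (i k) : c i i k = 0 := by linarith [hc_swap i i k]
  have hc_snd_eq_thd (i k) : c i k k = 0 := by rw [← hc_rotate, hc_fst_eq_snd]
  have hc_fst_eq_thd (i k) : c i k i = 0 := by rw [← hc_rotate, hc_snd_eq_thd]
  calc _ = ∑ i, ∑ j, ∑ k, W 0 i * W 1 j * W 2 k * c i j k := by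
        simp only [trace_diagonal_mul_diagonal_mul_diagonal_mul, Complex.im_sum,
          Function.comp_apply, ← Complex.ofReal_mul, Complex.im_ofReal_mul, c]
    _ = c 0 1 2 * W.det := by
        simp only [Fin.sum_univ_three, hc_fst_eq_snd, hc_snd_eq_thd, hc_fst_eq_thd, hc_swap 0 1 2,
          hc_swap 1 2 0, hc_swap 2 0 1, hc_rotate 0 1 2, hc_rotate 1 2 0, det_fin_three]
        ring

theorem det_pow_succ_ne_zero {R : Type*} [CommRing R] [IsDomain R] {n : ℕ} {x : Fin n → R}
    (hx_inj : Function.Injective x) (hx_ne : ∀ j, x j ≠ 0) :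
    (of fun i j : Fin n => x j ^ (i + 1 : ℕ)).det ≠ 0 := by
  have h_factor :
      (of fun i j : Fin n => x j ^ (i + 1 : ℕ)) = of fun i j => x j * (vandermonde x)ᵀ i j := by
    ext i j
    simp [pow_succ']
  rw [h_factor, det_mul_row, det_transpose]
  exact mul_ne_zero (Finset.prod_ne_zero_iff.mpr fun j _ => hx_ne j)
    (det_vandermonde_ne_zero_iff.mpr hx_inj)

theorem det_rpow_mul_succ_ne_zero {n : ℕ} {t : Fin n → ℝ} (ht_inj : Function.Injective t)
    (ht_pos : ∀ j, 0 < t j) {s : ℝ} (hs : s ≠ 0) :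
    (of fun i j : Fin n => t j ^ (s * (i + 1 : ℕ))).det ≠ 0 := by
  simp_rw [fun j => Real.rpow_mul_natCast (ht_pos j).le s]
  exact det_pow_succ_ne_zero
    (fun i j hij => ht_inj ((Real.rpow_left_inj (ht_pos i).le (ht_pos j).le hs).mp hij))
    (fun j => (Real.rpow_pos_of_pos (ht_pos j) s).ne')

theorem im_trace_cfc_rpow_diagonal {A : Matrix (Fin 3) (Fin 3) ℂ} (hA : A.IsHermitian)
    {t : Fin 3 → ℝ} (ht : (diagonal (Complex.ofReal ∘ t)).IsHermitian) (p : Fin 3 → ℝ) :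
    (trace (ht.cfc (fun x : ℝ => x ^ p 0) * A * ht.cfc (fun x : ℝ => x ^ p 1) * A *
      ht.cfc (fun x : ℝ => x ^ p 2) * A)).im =
      (A 0 1 * A 1 2 * A 2 0).im * (of fun i j => t j ^ p i).det := by
  have h_cfc (i) : ht.cfc (fun x : ℝ => x ^ p i) =
      diagonal (Complex.ofReal ∘ (of fun i j => t j ^ p i) i) :=
    cfc_diagonal_ofReal ht _
  rw [h_cfc, h_cfc, h_cfc, im_trace_diagonal_mul_isHermitian hA]

theorem posSemidef_fin_three_of_star_mul_self_eq_one {R : Type*} [Ring R] [PartialOrder R]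
    [StarRing R] [StarOrderedRing R] {a b c : R} (ha : star a * a = 1) (hb : star b * b = 1)
    (hc : star c * c = 1) : !![2, a, b; star a, 2, c; star b, star c, 2].PosSemidef := by
  -- The factor is the incidence matrix of a triangle, with edge weights `a`, `b`, `c`.
  have h_gram : !![2, a, b; star a, 2, c; star b, star c, 2] =
      !![1, a, 0; 1, 0, b; 0, 1, c]ᴴ * !![1, a, 0; 1, 0, b; 0, 1, c] := by
    ext i j
    fin_cases i <;> fin_cases j <;>
      simp [Matrix.mul_apply, Fin.sum_univ_three, ha, hb, hc, one_add_one_eq_two]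
  rw [h_gram]
  exact posSemidef_conjTranspose_mul_self _

open Matrix ComplexOrder in
theorem exists_nonreal_trace :
    ∃ (T A : Matrix (Fin 3) (Fin 3) ℂ) (hT : T.PosSemidef) (_hA : A.PosSemidef)
      (p : Fin 3 → ℝ), (∀ i, 0 < p i) ∧ (∑ i, p i = 1) ∧
      (trace (hT.1.cfc (fun x : ℝ => x ^ p 0) * A * hT.1.cfc (fun x : ℝ => x ^ p 1) * A *
        hT.1.cfc (fun x : ℝ => x ^ p 2) * A)).im ≠ 0 := by
  let t : Fin 3 → ℝ := fun j => (j + 1 : ℕ)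
  have ht_pos (j) : 0 < t j := by positivity
  have ht_inj : Function.Injective t := fun i j hij => by simpa [t, Fin.ext_iff] using hij
  have hT : (diagonal (Complex.ofReal ∘ t)).PosSemidef :=
    .diagonal fun j => Complex.zero_le_real.mpr (ht_pos j).le
  let A : Matrix (Fin 3) (Fin 3) ℂ :=
    !![2, Complex.I, Complex.I; star Complex.I, 2, Complex.I; star Complex.I, star Complex.I, 2]
  have hI : star Complex.I * Complex.I = 1 := by simp
  have hA : A.PosSemidef := posSemidef_fin_three_of_star_mul_self_eq_one hI hI hI
  have hA_im : (A 0 1 * A 1 2 * A 2 0).im ≠ 0 := by simp [A]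
  let p : Fin 3 → ℝ := fun i => 1 / 6 * (i + 1 : ℕ)
  have hp_sum : ∑ i, p i = 1 := by norm_num [p, Fin.sum_univ_three]
  refine ⟨diagonal (Complex.ofReal ∘ t), A, hT, hA, p, fun i => by positivity, hp_sum, ?_⟩
  rw [im_trace_cfc_rpow_diagonal hA.isHermitian hT.isHermitian p]
  exact mul_ne_zero hA_im (det_rpow_mul_succ_ne_zero ht_inj ht_pos (by norm_num))
end

section
/- For positive semidefinite n×n matrices X and Y, real p > 0 and 0 ≤ r ≤ 1, Tr[(Y^{r/2} X^r Y^{r/2})^p] ≤ Tr[(Y^{1/2} X Y^{1/2})^{rp}]. -/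
/-!
On top eigenvalues the inequality is Cordes': if `‖Y^(1/2) X Y^(1/2)‖ ≤ c` then `X ≤ c Y⁻¹`, so
`X^r ≤ c^r Y^(-r)` by operator monotonicity of `t ↦ t^r` for `0 ≤ r ≤ 1`, and conjugating by
`Y^(r/2)` gives `‖Y^(r/2) X^r Y^(r/2)‖ ≤ c^r`. The `k`-th compound matrix (the matrix of the `k`-th
exterior power) is multiplicative, commutes with powers of positive semidefinite matrices and has
the product of the `k` largest eigenvalues as its norm, so Cordes' inequality for compounds bounds
every such product of the left-hand matrix by that of the right-hand matrix raised to the power `r`.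
The layer-cake formula `u = ∫ log⁺ (u / τ) dτ` then turns products into sums: the sum of
`log⁺ (uᵢ / τ)` is the logarithm of the product of `uᵢ / τ` over the `i` with `uᵢ > τ`.
-/

section LogMajorization

open Finset Real
open scoped Interval

/-- Weak log-majorization of nonnegative families: for each `k`, the product of the `k` largest
`u i` is at most that of the `k` largest `v i`. Those products are maxima over `k`-element sets,
which avoids sorting. -/
def WeakLogMaj {ι : Type*} (u v : ι → ℝ) : Prop :=
  ∀ s : Finset ι, ∃ t : Finset ι, #t = #s ∧ ∏ i ∈ s, u i ≤ ∏ i ∈ t, v i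

lemma intervalIntegrable_posLog_const_div (x a b : ℝ) :
    IntervalIntegrable (fun τ ↦ log⁺ (x / τ)) MeasureTheory.volume a b := by
  have hmer : MeromorphicOn (fun τ : ℝ ↦ x / τ) [[a, b]] := fun τ _ ↦ by fun_prop
  simpa only [norm_eq_abs, posLog_abs] using hmer.intervalIntegrable_posLog_norm

lemma integral_posLog_const_div {x C : ℝ} (hx : 0 ≤ x) (hxC : x ≤ C) :
    ∫ τ in 0..C, log⁺ (x / τ) = x := by
  have below : ∫ τ in 0..x, log⁺ (x / τ) = ∫ τ in 0..x, (log x - log τ) := by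
    refine intervalIntegral.integral_congr_ae (.of_forall fun τ hτ ↦ ?_)
    rw [Set.uIoc_of_le hx] at hτ
    rw [posLog_eq_log (le_abs.2 (.inl ((one_le_div hτ.1).2 hτ.2))),
      log_div (hτ.1.trans_le hτ.2).ne' hτ.1.ne']
  have above : ∫ τ in x..C, log⁺ (x / τ) = 0 := by
    refine intervalIntegral.integral_zero_ae (.of_forall fun τ hτ ↦ ?_)
    rw [Set.uIoc_of_le hxC] at hτ
    have hτ₀ : 0 < τ := hx.trans_lt hτ.1
    rw [posLog_eq_zero_iff, abs_of_nonneg (by positivity), div_le_one hτ₀]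
    exact hτ.1.le
  rw [← intervalIntegral.integral_add_adjacent_intervals
      (intervalIntegrable_posLog_const_div x 0 x) (intervalIntegrable_posLog_const_div x x C),
    below, above, intervalIntegral.integral_sub (by simp) intervalIntegral.intervalIntegrable_log',
    integral_log]
  simp

namespace WeakLogMaj

variable {ι : Type*} {u v : ι → ℝ}

lemma rpow (h : WeakLogMaj u v) (hu : 0 ≤ u) (hv : 0 ≤ v) {p : ℝ} (hp : 0 ≤ p) :
    WeakLogMaj (fun i ↦ u i ^ p) (fun i ↦ v i ^ p) := fun s ↦ by
  obtain ⟨t, hcard, hle⟩ := h s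
  refine ⟨t, hcard, ?_⟩
  rw [finsetProd_rpow _ _ fun i _ ↦ hu i, finsetProd_rpow _ _ fun i _ ↦ hv i]
  exact rpow_le_rpow (prod_nonneg fun i _ ↦ hu i) hle hp

variable [Fintype ι]

lemma sum_posLog_div_le (h : WeakLogMaj u v) (hu : 0 ≤ u) {τ : ℝ} (hτ : 0 < τ) :
    ∑ i, log⁺ (u i / τ) ≤ ∑ i, log⁺ (v i / τ) := by
  set s : Finset ι := {i | τ < u i}
  obtain ⟨t, hcard, hle⟩ := h s
  have hs : ∀ i ∈ s, 1 < u i / τ := fun i hi ↦ (one_lt_div hτ).2 (mem_filter.1 hi).2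
  calc ∑ i, log⁺ (u i / τ) = ∑ i ∈ s, log⁺ (u i / τ) := by
        refine (sum_subset (subset_univ s) fun i _ hi ↦ ?_).symm
        have hui : u i ≤ τ := by simpa [s] using hi
        rw [posLog_eq_zero_iff, abs_of_nonneg (div_nonneg (hu i) hτ.le)]
        exact (div_le_one hτ).2 hui
    _ = ∑ i ∈ s, log (u i / τ) :=
        sum_congr rfl fun i hi ↦ posLog_eq_log ((hs i hi).le.trans (le_abs_self _))
    _ = log (∏ i ∈ s, u i / τ) := (log_prod fun i hi ↦ (zero_lt_one.trans (hs i hi)).ne').symm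
    _ ≤ log (∏ i ∈ t, v i / τ) := by
        refine log_le_log (prod_pos fun i hi ↦ zero_lt_one.trans (hs i hi)) ?_
        rw [prod_div_distrib, prod_div_distrib, prod_const, prod_const, hcard]
        gcongr
    _ ≤ log⁺ (∏ i ∈ t, v i / τ) := le_max_right _ _
    _ ≤ ∑ i ∈ t, log⁺ (v i / τ) := posLog_prod t _
    _ ≤ ∑ i, log⁺ (v i / τ) := sum_le_univ_sum_of_nonneg fun _ ↦ posLog_nonneg

lemma sum_le_sum (h : WeakLogMaj u v) (hu : 0 ≤ u) (hv : 0 ≤ v) : ∑ i, u i ≤ ∑ i, v i := by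
  set C := ∑ i, u i + ∑ i, v i
  have hC : 0 ≤ C := add_nonneg (sum_nonneg fun i _ ↦ hu i) (sum_nonneg fun i _ ↦ hv i)
  have layerCake : ∀ w : ι → ℝ, 0 ≤ w → ∑ i, w i ≤ C →
      ∑ i, w i = ∫ τ in 0..C, ∑ i, log⁺ (w i / τ) := fun w hw hwC ↦ by
    rw [intervalIntegral.integral_finsetSum fun i _ ↦
      intervalIntegrable_posLog_const_div (w i) 0 C]
    exact sum_congr rfl fun i _ ↦ (integral_posLog_const_div (hw i)
      ((single_le_sum (fun j _ ↦ hw j) (mem_univ i)).trans hwC)).symm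
  rw [layerCake u hu (le_add_of_nonneg_right (sum_nonneg fun i _ ↦ hv i)),
    layerCake v hv (le_add_of_nonneg_left (sum_nonneg fun i _ ↦ hu i))]
  refine intervalIntegral.integral_mono_on_of_le_Ioo hC ?_ ?_ fun τ hτ ↦
    h.sum_posLog_div_le hu hτ.1
  all_goals
    simpa only [Finset.sum_fn] using IntervalIntegrable.sum univ fun i _ ↦
      intervalIntegrable_posLog_const_div _ 0 C

end WeakLogMaj

end LogMajorization

section CStarAlgebra

open Filter
open scoped NNReal Topology

variable {A : Type*} [CStarAlgebra A] [PartialOrder A] [StarOrderedRing A]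

lemma continuousOn_rpow_const {r : ℝ} (hr : 0 ≤ r) :
    ContinuousOn (fun a : A ↦ a ^ r) {a | 0 ≤ a} :=
  continuousOn_id.cfc_nnreal_of_mem_nhdsSet (s := Set.univ) (· ^ r) univ_mem
    (hf := (NNReal.continuous_rpow_const hr).continuousOn)

lemma smul_rpow (c : ℝ≥0) {a : A} (ha : 0 ≤ a) {r : ℝ} (hr : 0 ≤ r) :
    (c • a) ^ r = c ^ r • a ^ r := by
  have hcont := NNReal.continuous_rpow_const hr
  rw [CFC.rpow_def, CFC.rpow_def, ← cfc_comp_smul c _ a hcont.continuousOn,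
    ← cfc_smul _ _ a hcont.continuousOn]
  simp only [smul_eq_mul, NNReal.mul_rpow]

lemma norm_rpow_mul_rpow_mul_rpow_le_of_isStrictlyPositive {a b : A} (ha : 0 ≤ a)
    (hb : IsStrictlyPositive b) {r : ℝ} (hr : r ∈ Set.Icc (0 : ℝ) 1) :
    ‖b ^ (r / 2) * a ^ r * b ^ (r / 2)‖ ≤ ‖b ^ (2⁻¹ : ℝ) * a * b ^ (2⁻¹ : ℝ)‖ ^ r := by
  have hsa (s : ℝ) : IsSelfAdjoint (b ^ s) := CFC.rpow_nonneg.isSelfAdjoint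
  have hconj (c : ℝ≥0) (s t : ℝ) : b ^ s * (c • b ^ t) * b ^ s = c • b ^ (s + t + s) := by
    rw [mul_smul_comm, smul_mul_assoc, CFC.rpow_add hb.isUnit, CFC.rpow_add hb.isUnit]
  set c : ℝ≥0 := ‖b ^ (2⁻¹ : ℝ) * a * b ^ (2⁻¹ : ℝ)‖₊
  have hle : a ≤ c • b ^ (-1 : ℝ) := by
    have hc : b ^ (2⁻¹ : ℝ) * a * b ^ (2⁻¹ : ℝ) ≤ c • b ^ (0 : ℝ) := by
      rw [CFC.rpow_zero b, ← Algebra.algebraMap_eq_smul_one]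
      exact (CStarAlgebra.nnnorm_le_iff_of_nonneg _ _ ((hsa _).conjugate_nonneg ha)).1 le_rfl
    calc a = b ^ (-2⁻¹ : ℝ) * (b ^ (2⁻¹ : ℝ) * a * b ^ (2⁻¹ : ℝ)) * b ^ (-2⁻¹ : ℝ) := by
          simp only [mul_assoc, CFC.rpow_mul_rpow_neg (2⁻¹ : ℝ) hb, mul_one]
          rw [← mul_assoc, CFC.rpow_neg_mul_rpow _ hb, one_mul]
      _ ≤ b ^ (-2⁻¹ : ℝ) * (c • b ^ (0 : ℝ)) * b ^ (-2⁻¹ : ℝ) := (hsa _).conjugate_le_conjugate hc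
      _ = c • b ^ (-1 : ℝ) := by rw [hconj]; norm_num
  have hrpow : a ^ r ≤ c ^ r • b ^ (-r) := by
    calc a ^ r ≤ (c • b ^ (-1 : ℝ)) ^ r := CFC.rpow_le_rpow hr hle
      _ = c ^ r • b ^ (-r) := by
        rw [smul_rpow c CFC.rpow_nonneg hr.1, CFC.rpow_rpow b _ _ (by norm_num) hb,
          neg_one_mul]
  refine (CStarAlgebra.norm_le_iff_le_algebraMap _ (by positivity)
    ((hsa _).conjugate_nonneg CFC.rpow_nonneg)).2 ?_
  calc b ^ (r / 2) * a ^ r * b ^ (r / 2) ≤ b ^ (r / 2) * (c ^ r • b ^ (-r)) * b ^ (r / 2) :=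
        (hsa _).conjugate_le_conjugate hrpow
    _ = algebraMap ℝ≥0 A (c ^ r) := by
        rw [hconj, Algebra.algebraMap_eq_smul_one, show r / 2 + -r + r / 2 = 0 by ring,
          CFC.rpow_zero b]

theorem norm_rpow_mul_rpow_mul_rpow_le {a b : A} (ha : 0 ≤ a) (hb : 0 ≤ b) {r : ℝ}
    (hr : r ∈ Set.Icc (0 : ℝ) 1) :
    ‖b ^ (r / 2) * a ^ r * b ^ (r / 2)‖ ≤ ‖b ^ (2⁻¹ : ℝ) * a * b ^ (2⁻¹ : ℝ)‖ ^ r := by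
  let bε (ε : ℝ) : A := b + algebraMap ℝ A ε
  have hpos : ∀ᶠ ε in 𝓝[>] (0 : ℝ), IsStrictlyPositive (bε ε) := by
    filter_upwards [self_mem_nhdsWithin] with ε hε
    exact IsStrictlyPositive.nonneg_add hb (isStrictlyPositive_algebraMap hε)
  have htendsto : Tendsto bε (𝓝[>] 0) (𝓝[{x | 0 ≤ x}] b) := by
    refine tendsto_nhdsWithin_iff.2 ⟨?_, hpos.mono fun _ h ↦ h.nonneg⟩
    have hcont : Continuous bε := by fun_prop
    exact (hcont.tendsto' 0 b (by simp [bε])).mono_left nhdsWithin_le_nhds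
  have hlim {s : ℝ} (hs : 0 ≤ s) (x : A) :
      Tendsto (fun ε ↦ ‖bε ε ^ s * x * bε ε ^ s‖) (𝓝[>] 0) (𝓝 ‖b ^ s * x * b ^ s‖) := by
    have h := (continuousOn_rpow_const hs b hb).tendsto.comp htendsto
    exact ((h.mul_const x).mul h).norm
  exact le_of_tendsto_of_tendsto (hlim (by linarith [hr.1]) _)
    ((hlim (by norm_num) a).rpow_const (.inr hr.1))
    (hpos.mono fun ε hε ↦ norm_rpow_mul_rpow_mul_rpow_le_of_isStrictlyPositive ha hε hr)

end CStarAlgebra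

section Matrix

open Finset Matrix Unitary
open scoped ComplexOrder MatrixOrder Matrix.Norms.L2Operator

section CompoundMatrix

open Set.powersetCard exteriorPower

variable {R l m n : Type*} [CommRing R] [LinearOrder l] [LinearOrder m] [LinearOrder n] {k : ℕ}

/-- The `k`-th compound matrix: its entries are the `k × k` minors of `A`, with rows and columns
listed in increasing order. It is the matrix of the `k`-th exterior power of `A`. -/
def compoundMatrix (k : ℕ) (A : Matrix m n R) :
    Matrix (Set.powersetCard m k) (Set.powersetCard n k) R :=
  of fun s t ↦ (A.submatrix (ofFinEmbEquiv.symm s) (ofFinEmbEquiv.symm t)).det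

lemma toMatrix_exteriorPower_map [Finite m] [Fintype n] (A : Matrix m n R) :
    LinearMap.toMatrix ((Pi.basisFun R n).exteriorPower k) ((Pi.basisFun R m).exteriorPower k)
      (map k A.toLin') = compoundMatrix k A := by
  ext s t
  rw [LinearMap.toMatrix_apply, basis_apply, basis_repr_apply, map_apply_ιMulti_family,
    ιMulti_family, ιMultiDual_apply_ιMulti, ← det_transpose]
  congr 1
  ext i j
  simp

lemma compoundMatrix_mul [Finite l] [Fintype m] [Finite n] (A : Matrix l m R)
    (B : Matrix m n R) :
    compoundMatrix k (A * B) = compoundMatrix k A * compoundMatrix k B := by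
  cases nonempty_fintype l
  cases nonempty_fintype n
  simp only [← toMatrix_exteriorPower_map]
  rw [toLin'_mul, exteriorPower.map_comp,
    LinearMap.toMatrix_comp _ ((Pi.basisFun R m).exteriorPower k)]

lemma compoundMatrix_conjTranspose [StarRing R] (A : Matrix m n R) :
    compoundMatrix k Aᴴ = (compoundMatrix k A)ᴴ := by
  ext s t
  exact det_conjTranspose (A.submatrix (ofFinEmbEquiv.symm t) (ofFinEmbEquiv.symm s))

lemma compoundMatrix_diagonal (d : n → R) :
    compoundMatrix k (diagonal d) = diagonal fun s ↦ ∏ i ∈ s.1, d i := by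
  ext s t
  obtain rfl | hst := eq_or_ne s t
  · rw [diagonal_apply_eq, compoundMatrix, of_apply,
      submatrix_diagonal _ _ (ofFinEmbEquiv.symm s).injective, det_diagonal,
      ← map_orderEmbOfFin_univ s.1 s.2, prod_map]
    rfl
  · rw [diagonal_apply_ne _ hst]
    obtain ⟨i, his, hit⟩ : ∃ i ∈ s.1, i ∉ t.1 := by
      by_contra! hsub
      exact hst (Subtype.ext (eq_of_subset_of_card_le hsub (t.2.trans s.2.symm).le))
    obtain ⟨j, rfl⟩ := (mem_range_ofFinEmbEquiv_symm_iff_mem s i).2 his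
    refine det_eq_zero_of_row_eq_zero j fun j' ↦ diagonal_apply_ne _ ?_
    rintro hj
    exact hit (hj ▸ (mem_range_ofFinEmbEquiv_symm_iff_mem t _).1 ⟨j', rfl⟩)

lemma compoundMatrix_one : compoundMatrix k (1 : Matrix n n R) = 1 := by
  rw [← diagonal_one, compoundMatrix_diagonal]
  simp only [prod_const_one, diagonal_one]

variable [Fintype n] [StarRing R]

/-- The compound matrix as a star-monoid homomorphism; through `Unitary.map` it sends unitaries to
unitaries. -/
def compoundStarMonoidHom (k : ℕ) :
    Matrix n n R →⋆* Matrix (Set.powersetCard n k) (Set.powersetCard n k) R where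
  toFun := compoundMatrix k
  map_one' := compoundMatrix_one
  map_mul' := compoundMatrix_mul
  map_star' := compoundMatrix_conjTranspose

lemma compoundMatrix_conjStarAlgAut_diagonal (U : unitary (Matrix n n R)) (d : n → R) :
    compoundMatrix k (conjStarAlgAut R _ U (diagonal d)) =
      conjStarAlgAut R _ (Unitary.map (compoundStarMonoidHom k) U)
        (diagonal fun s ↦ ∏ i ∈ s.1, d i) := by
  simp only [conjStarAlgAut_apply, compoundMatrix_mul, compoundMatrix_diagonal]
  rw [star_eq_conjTranspose, compoundMatrix_conjTranspose]
  rfl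

end CompoundMatrix

section Spectral

variable {n : Type*} [Fintype n] [DecidableEq n]

lemma cfc_conjStarAlgAut_diagonal (U : unitary (Matrix n n ℂ)) (d : n → ℝ) (f : ℝ → ℝ) :
    cfc f (conjStarAlgAut ℂ _ U (diagonal fun i ↦ (d i : ℂ))) =
      conjStarAlgAut ℂ _ U (diagonal fun i ↦ (f (d i) : ℂ)) := by
  let φ : (n → ℂ) →⋆ₐ[ℂ] Matrix n n ℂ :=
    (conjStarAlgAut ℂ _ U : Matrix n n ℂ →⋆ₐ[ℂ] Matrix n n ℂ).comp
      { diagonalAlgHom ℂ with map_star' := fun v ↦ (diagonal_conjTranspose v).symm }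
  -- Instance search fails here: two `ℝ`-algebra structures on `n → ℂ` agree only after unfolding.
  have : ContinuousFunctionalCalculus ℝ (n → ℂ) IsSelfAdjoint :=
    IsSelfAdjoint.instContinuousFunctionalCalculus
  have hspec : (⋃ i, spectrum ℝ (d i : ℂ)).Finite := Set.finite_iUnion fun i ↦
    (Set.finite_singleton (d i)).subset (CFC.spectrum_algebraMap_subset (A := ℂ) (d i))
  have hsa_apply (i : n) : IsSelfAdjoint (d i : ℂ) := Complex.conj_ofReal _
  have hsa : IsSelfAdjoint fun i ↦ (d i : ℂ) := funext hsa_apply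
  have hcfc : cfc f (fun i ↦ (d i : ℂ)) = fun i ↦ (f (d i) : ℂ) := by
    rw [cfc_map_pi (S := ℂ) f (fun i ↦ (d i : ℂ)) (hspec.continuousOn f) hsa hsa_apply]
    exact funext fun i ↦ cfc_algebraMap (A := ℂ) (d i) f
  have hφ : φ (cfc f fun i ↦ (d i : ℂ)) = cfc f (φ fun i ↦ (d i : ℂ)) :=
    φ.map_cfc f (fun i ↦ (d i : ℂ)) ((hspec.subset (Pi.spectrum_eq ..).le).continuousOn f)
      φ.toAlgHom.toLinearMap.continuous_of_finiteDimensional hsa (hsa.map φ)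
  exact hφ.symm.trans (congr_arg φ hcfc)

variable {𝕜 : Type*} [RCLike 𝕜]

lemma norm_conjStarAlgAut_diagonal (U : unitary (Matrix n n 𝕜)) (d : n → 𝕜) :
    ‖conjStarAlgAut 𝕜 _ U (diagonal d)‖ = ‖d‖ := by
  rw [conjStarAlgAut_apply, ← coe_star, CStarRing.norm_mul_coe_unitary,
    CStarRing.norm_coe_unitary_mul, l2_opNorm_diagonal]

lemma trace_cfc {A : Matrix n n 𝕜} (hA : A.IsHermitian) (f : ℝ → ℝ) :
    trace (cfc f A) = ∑ i, (f (hA.eigenvalues i) : 𝕜) := by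
  rw [hA.cfc_eq, IsHermitian.cfc, conjStarAlgAut_apply, trace_mul_cycle, coe_star_mul_self,
    one_mul, trace_diagonal]
  rfl

lemma trace_rpow {A : Matrix n n ℂ} (hA : A.PosSemidef) (q : ℝ) :
    trace (A ^ q) = (∑ i, hA.1.eigenvalues i ^ q : ℝ) := by
  rw [CFC.rpow_eq_cfc_real hA.nonneg, trace_cfc hA.1, Complex.ofReal_sum]
  rfl

lemma isHermitian_cfc_rpow {A : Matrix n n ℂ} (hA : A.PosSemidef) (q : ℝ) :
    hA.1.cfc (fun x ↦ x ^ q) = A ^ q := by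
  rw [← hA.1.cfc_eq, CFC.rpow_eq_cfc_real hA.nonneg]

lemma posSemidef_rpow_mul_mul_rpow {X : Matrix n n ℂ} (hX : X.PosSemidef) (Y : Matrix n n ℂ)
    (s : ℝ) : (Y ^ s * X * Y ^ s).PosSemidef :=
  (CFC.rpow_nonneg.isSelfAdjoint.conjugate_nonneg hX.nonneg).posSemidef

end Spectral

section CompoundSpectral

variable {n : Type*} [LinearOrder n] {k : ℕ} {A : Matrix n n ℂ}

lemma posSemidef_compoundMatrix [Finite n] (hA : A.PosSemidef) :
    (compoundMatrix k A).PosSemidef := by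
  cases nonempty_fintype n
  obtain ⟨B, rfl⟩ := CStarAlgebra.nonneg_iff_eq_star_mul_self.1 hA.nonneg
  rw [star_eq_conjTranspose, compoundMatrix_mul, compoundMatrix_conjTranspose]
  exact posSemidef_conjTranspose_mul_self _

variable [Fintype n]

lemma compoundMatrix_cfc (hA : A.IsHermitian) (f : ℝ → ℝ) :
    compoundMatrix k (cfc f A) =
      conjStarAlgAut ℂ _ (Unitary.map (compoundStarMonoidHom k) hA.eigenvectorUnitary)
        (diagonal fun s ↦ ((∏ i ∈ s.1, f (hA.eigenvalues i) : ℝ) : ℂ)) := by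
  simp only [Complex.ofReal_prod]
  rw [hA.cfc_eq, IsHermitian.cfc, compoundMatrix_conjStarAlgAut_diagonal]
  rfl

lemma compoundMatrix_spectral_theorem (hA : A.IsHermitian) :
    compoundMatrix k A =
      conjStarAlgAut ℂ _ (Unitary.map (compoundStarMonoidHom k) hA.eigenvectorUnitary)
        (diagonal fun s ↦ ((∏ i ∈ s.1, hA.eigenvalues i : ℝ) : ℂ)) := by
  simpa only [cfc_id' ℝ A hA.isSelfAdjoint] using compoundMatrix_cfc (k := k) hA fun x ↦ x

lemma compoundMatrix_rpow (hA : A.PosSemidef) (q : ℝ) :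
    compoundMatrix k (A ^ q) = compoundMatrix k A ^ q := by
  rw [CFC.rpow_eq_cfc_real hA.nonneg, CFC.rpow_eq_cfc_real (posSemidef_compoundMatrix hA).nonneg,
    compoundMatrix_cfc hA.1, compoundMatrix_spectral_theorem hA.1, cfc_conjStarAlgAut_diagonal]
  simp only [Real.finsetProd_rpow _ _ fun i _ ↦ hA.eigenvalues_nonneg i]

lemma norm_compoundMatrix (hA : A.IsHermitian) :
    ‖compoundMatrix k A‖ = ‖fun s : Set.powersetCard n k ↦ ∏ i ∈ s.1, hA.eigenvalues i‖ := by
  rw [compoundMatrix_spectral_theorem hA, norm_conjStarAlgAut_diagonal]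
  simp only [Pi.norm_def, Complex.nnnorm_real]

lemma prod_eigenvalues_le_norm_compoundMatrix (hA : A.IsHermitian) (s : Finset n) :
    ∏ i ∈ s, hA.eigenvalues i ≤ ‖compoundMatrix #s A‖ := by
  rw [norm_compoundMatrix hA]
  exact (le_abs_self _).trans (norm_le_pi_norm
    (fun t : Set.powersetCard n #s ↦ ∏ i ∈ t.1, hA.eigenvalues i) ⟨s, rfl⟩)

lemma exists_norm_compoundMatrix_eq_prod_eigenvalues (hA : A.PosSemidef)
    (hk : k ≤ Fintype.card n) :
    ∃ t : Finset n, #t = k ∧ ‖compoundMatrix k A‖ = ∏ i ∈ t, hA.1.eigenvalues i := by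
  have hprod (t : Finset n) : 0 ≤ ∏ i ∈ t, hA.1.eigenvalues i :=
    prod_nonneg fun i _ ↦ hA.eigenvalues_nonneg i
  obtain ⟨s, -, hs⟩ := exists_subset_card_eq (hk.trans_eq card_univ.symm)
  have : Nonempty (Set.powersetCard n k) := ⟨⟨s, hs⟩⟩
  obtain ⟨⟨t, rfl⟩, ht⟩ :=
    Finite.exists_max fun t : Set.powersetCard n k ↦ ∏ i ∈ t.1, hA.1.eigenvalues i
  refine ⟨t, rfl, le_antisymm ?_ (prod_eigenvalues_le_norm_compoundMatrix hA.1 t)⟩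
  rw [norm_compoundMatrix hA.1]
  exact (pi_norm_le_iff_of_nonneg (hprod t)).2 fun u ↦ (abs_of_nonneg (hprod u.1)).trans_le (ht u)

end CompoundSpectral

section Araki

variable {n : Type*} [Fintype n] {X Y : Matrix n n ℂ} {r : ℝ}

lemma norm_compoundMatrix_rpow_mul_rpow_mul_rpow_le [LinearOrder n] (k : ℕ) (hX : X.PosSemidef)
    (hY : Y.PosSemidef) (hr : r ∈ Set.Icc (0 : ℝ) 1) :
    ‖compoundMatrix k (Y ^ (r / 2) * X ^ r * Y ^ (r / 2))‖ ≤
      ‖compoundMatrix k (Y ^ (2⁻¹ : ℝ) * X * Y ^ (2⁻¹ : ℝ))‖ ^ r := by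
  simp only [compoundMatrix_mul, compoundMatrix_rpow hX, compoundMatrix_rpow hY]
  exact norm_rpow_mul_rpow_mul_rpow_le (posSemidef_compoundMatrix hX).nonneg
    (posSemidef_compoundMatrix hY).nonneg hr

variable [DecidableEq n]

lemma weakLogMaj_eigenvalues_rpow (hX : X.PosSemidef) (hY : Y.PosSemidef)
    (hr : r ∈ Set.Icc (0 : ℝ) 1) (hM : (Y ^ (r / 2) * X ^ r * Y ^ (r / 2)).PosSemidef)
    (hN : (Y ^ (2⁻¹ : ℝ) * X * Y ^ (2⁻¹ : ℝ)).PosSemidef) :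
    WeakLogMaj hM.1.eigenvalues fun i ↦ hN.1.eigenvalues i ^ r := by
  obtain ⟨order, rfl⟩ : ∃ order : LinearOrder n, order.toDecidableEq = ‹DecidableEq n› :=
    ⟨.lift' (Fintype.equivFin n) (Fintype.equivFin n).injective, Subsingleton.elim _ _⟩
  intro s
  obtain ⟨t, hcard, ht⟩ := exists_norm_compoundMatrix_eq_prod_eigenvalues hN s.card_le_univ
  refine ⟨t, hcard, ?_⟩
  calc ∏ i ∈ s, hM.1.eigenvalues i
      ≤ ‖compoundMatrix #s (Y ^ (r / 2) * X ^ r * Y ^ (r / 2))‖ :=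
        prod_eigenvalues_le_norm_compoundMatrix hM.1 s
    _ ≤ ‖compoundMatrix #s (Y ^ (2⁻¹ : ℝ) * X * Y ^ (2⁻¹ : ℝ))‖ ^ r :=
        norm_compoundMatrix_rpow_mul_rpow_mul_rpow_le #s hX hY hr
    _ = ∏ i ∈ t, hN.1.eigenvalues i ^ r := by
        rw [ht, Real.finsetProd_rpow _ _ fun i _ ↦ hN.eigenvalues_nonneg i]

theorem araki_inequality_general (hX : X.PosSemidef) (hY : Y.PosSemidef) {p : ℝ} (hp : 0 ≤ p)
    (hr : r ∈ Set.Icc (0 : ℝ) 1) :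
    trace ((Y ^ (r / 2) * X ^ r * Y ^ (r / 2)) ^ p) ≤
      trace ((Y ^ (2⁻¹ : ℝ) * X * Y ^ (2⁻¹ : ℝ)) ^ (r * p)) := by
  have hM := posSemidef_rpow_mul_mul_rpow (CFC.rpow_nonneg (a := X) (y := r)).posSemidef Y (r / 2)
  have hN := posSemidef_rpow_mul_mul_rpow hX Y 2⁻¹
  have hN_rpow (i : n) : 0 ≤ hN.1.eigenvalues i ^ r := Real.rpow_nonneg (hN.eigenvalues_nonneg i) r
  have hmaj : WeakLogMaj (fun i ↦ hM.1.eigenvalues i ^ p)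
      (fun i ↦ (hN.1.eigenvalues i ^ r) ^ p) :=
    (weakLogMaj_eigenvalues_rpow hX hY hr hM hN).rpow hM.eigenvalues_nonneg hN_rpow hp
  rw [trace_rpow hM, trace_rpow hN, Complex.real_le_real]
  simpa only [Real.rpow_mul (hN.eigenvalues_nonneg _)] using hmaj.sum_le_sum
    (fun i ↦ Real.rpow_nonneg (hM.eigenvalues_nonneg i) p)
    fun i ↦ Real.rpow_nonneg (hN_rpow i) p

end Araki

end Matrix

open Matrix ComplexOrder in
theorem araki_inequality {n : ℕ} (X Y : Matrix (Fin n) (Fin n) ℂ)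
    (hX : X.PosSemidef) (hY : Y.PosSemidef) (p r : ℝ) (hp : 0 < p) (hr : r ∈ Set.Icc (0 : ℝ) 1) :
    trace (cfc (fun x : ℝ => x ^ p)
        (hY.1.cfc (fun x : ℝ => x ^ (r / 2)) * hX.1.cfc (fun x : ℝ => x ^ r) *
          hY.1.cfc (fun x : ℝ => x ^ (r / 2)))) ≤
      trace (cfc (fun x : ℝ => x ^ (r * p))
        (hY.1.cfc (fun x : ℝ => x ^ ((2 : ℝ)⁻¹)) * X *
          hY.1.cfc (fun x : ℝ => x ^ ((2 : ℝ)⁻¹)))) := by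
  open scoped MatrixOrder Matrix.Norms.L2Operator in
  rw [isHermitian_cfc_rpow hX, isHermitian_cfc_rpow hY, isHermitian_cfc_rpow hY,
    ← CFC.rpow_eq_cfc_real
      (posSemidef_rpow_mul_mul_rpow CFC.rpow_nonneg.posSemidef Y (r / 2)).nonneg,
    ← CFC.rpow_eq_cfc_real (posSemidef_rpow_mul_mul_rpow hX Y 2⁻¹).nonneg]
  exact araki_inequality_general hX hY hp.le hr
end
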